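/- arXiv:2510.25900 — 4 statements merged into one kernel-verified Lean document; each statement's English description precedes it below -/
import Mathlib

section
/- (Dichotomy for L₁.) Let (d_j)_{j≥1} be strictly positive reals and m ≥ 1 an integer, and set L₁(M;δ) = ∫_0^∞ [1 − ∏_{j=1}^M (1 − S_m(d_j u) e^{−d_j u})] du. Then lim_{M→∞} L₁(M;δ) < ∞ if and only if there exists ξ > 0 such that ∑_{j=1}^∞ e^{−d_j ξ} < ∞; equivalently, lim_{M→∞} L₁(M;δ) = ∞ if and only if ∑_{j=1}^∞ e^{−d_j ξ} = ∞ for every ξ > 0. -/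
open MeasureTheory Filter

/-- `Sm m y` is the `m`-th partial sum of the exponential series. -/
noncomputable def Sm (m : ℕ) (y : ℝ) : ℝ := ∑ i ∈ Finset.range m, y ^ i / (Nat.factorial i)

/-- `L1 m d M = ∫_0^∞ [1 − ∏_{j=1}^M (1 − S_m(d_j u) e^{−d_j u})] du`. -/
noncomputable def L1 (m : ℕ) (d : ℕ → ℝ) (M : ℕ) : ℝ :=
  ∫ u in Set.Ioi (0 : ℝ),
    (1 - ∏ j ∈ Finset.Icc 1 M, (1 - Sm m (d j * u) * Real.exp (-(d j * u))))

/-- The factor `S_m(y) e^{-y}`. -/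
noncomputable def pf (m : ℕ) (y : ℝ) : ℝ := Sm m y * Real.exp (-y)

lemma pf_le_one (m : ℕ) {y : ℝ} (hy : 0 ≤ y) : pf m y ≤ 1 := by
  have h : Sm m y ≤ Real.exp y := Real.sum_le_exp_of_nonneg hy m
  calc pf m y ≤ Real.exp y * Real.exp (-y) :=
        mul_le_mul_of_nonneg_right h (Real.exp_pos _).le
    _ = 1 := by rw [← Real.exp_add]; simp

lemma exp_le_pf (m : ℕ) (hm : 1 ≤ m) {y : ℝ} (hy : 0 ≤ y) : Real.exp (-y) ≤ pf m y := by
  have h : 1 ≤ Sm m y := by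
    have := Finset.single_le_sum (s := Finset.range m)
      (f := fun i => y ^ i / (Nat.factorial i : ℝ)) (fun i _ => by positivity)
      (Finset.mem_range.2 hm : 0 ∈ Finset.range m)
    simpa [Sm] using this
  have := mul_le_mul_of_nonneg_right h (Real.exp_pos (-y)).le
  simpa [pf] using this

lemma pf_nonneg (m : ℕ) {y : ℝ} (hy : 0 ≤ y) : 0 ≤ pf m y := by
  unfold pf Sm
  positivity

lemma pf_le (m : ℕ) {y : ℝ} (hy : 0 ≤ y) :
    pf m y ≤ (∑ i ∈ Finset.range m, (2 : ℝ) ^ i) * Real.exp (-(y / 2)) := by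
  have h : Sm m y ≤ (∑ i ∈ Finset.range m, (2 : ℝ) ^ i) * Real.exp (y / 2) := by
    rw [Finset.sum_mul]
    refine Finset.sum_le_sum fun i _ => ?_
    have h1 := Real.pow_div_factorial_le_exp (y / 2) (show 0 ≤ y / 2 by positivity) i
    have h2 : y ^ i / (Nat.factorial i : ℝ) = 2 ^ i * ((y / 2) ^ i / (Nat.factorial i : ℝ)) := by
      rw [div_pow]; field_simp
    rw [h2]
    exact mul_le_mul_of_nonneg_left h1 (by positivity)
  calc pf m y ≤ (∑ i ∈ Finset.range m, (2 : ℝ) ^ i) * Real.exp (y / 2) * Real.exp (-y) :=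
        mul_le_mul_of_nonneg_right h (Real.exp_pos _).le
    _ = _ := by rw [mul_assoc, ← Real.exp_add]; congr 2; ring

lemma pf_continuous (m : ℕ) : Continuous (pf m) := by
  unfold pf Sm
  fun_prop

/-- The integrand. -/
noncomputable def Fi (m : ℕ) (d : ℕ → ℝ) (M : ℕ) (u : ℝ) : ℝ :=
  1 - ∏ j ∈ Finset.Icc 1 M, (1 - pf m (d j * u))

lemma L1_eq (m : ℕ) (d : ℕ → ℝ) (M : ℕ) : L1 m d M = ∫ u in Set.Ioi (0 : ℝ), Fi m d M u := rfl

lemma Fi_continuous (m : ℕ) (d : ℕ → ℝ) (M : ℕ) : Continuous (Fi m d M) := by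
  have := pf_continuous m
  unfold Fi
  fun_prop

section
variable (m : ℕ) (d : ℕ → ℝ) (hd : ∀ j, 1 ≤ j → 0 < d j)

lemma prod_bounds {u : ℝ} (hd : ∀ j, 1 ≤ j → 0 < d j) (hu : 0 < u) (M : ℕ) :
    0 ≤ ∏ j ∈ Finset.Icc 1 M, (1 - pf m (d j * u)) ∧
    ∏ j ∈ Finset.Icc 1 M, (1 - pf m (d j * u)) ≤ 1 := by
  constructor
  · refine Finset.prod_nonneg fun j hj => ?_
    have := hd j (Finset.mem_Icc.1 hj).1
    have := pf_le_one m (y := d j * u) (by positivity)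
    linarith
  · refine Finset.prod_le_one (fun j hj => ?_) fun j hj => ?_
    · have := hd j (Finset.mem_Icc.1 hj).1
      have := pf_le_one m (y := d j * u) (by positivity)
      linarith
    · have := hd j (Finset.mem_Icc.1 hj).1
      have := pf_nonneg m (y := d j * u) (by positivity)
      linarith

lemma Fi_nonneg {u : ℝ} (hd : ∀ j, 1 ≤ j → 0 < d j) (hu : 0 < u) (M : ℕ) : 0 ≤ Fi m d M u := by
  have := (prod_bounds m d hd hu M).2
  unfold Fi; linarith

lemma Fi_le_one {u : ℝ} (hd : ∀ j, 1 ≤ j → 0 < d j) (hu : 0 < u) (M : ℕ) : Fi m d M u ≤ 1 := by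
  have := (prod_bounds m d hd hu M).1
  unfold Fi; linarith

lemma Fi_succ (M : ℕ) (u : ℝ) :
    Fi m d (M + 1) u = Fi m d M u + (1 - Fi m d M u) * pf m (d (M + 1) * u) := by
  unfold Fi
  rw [Finset.prod_Icc_succ_top (by omega)]
  ring

lemma Fi_le_succ {u : ℝ} (hd : ∀ j, 1 ≤ j → 0 < d j) (hu : 0 < u) (M : ℕ) :
    Fi m d M u ≤ Fi m d (M + 1) u := by
  have h1 := Fi_le_one m d hd hu M
  have := hd (M + 1) (by omega)
  have h2 := pf_nonneg m (y := d (M + 1) * u) (by positivity)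
  rw [Fi_succ]
  nlinarith

lemma Fi_le_sum {u : ℝ} (hd : ∀ j, 1 ≤ j → 0 < d j) (hu : 0 < u) (M : ℕ) :
    Fi m d M u ≤ ∑ j ∈ Finset.Icc 1 M, pf m (d j * u) := by
  induction M with
  | zero => simp [Fi]
  | succ M ih =>
    rw [Finset.sum_Icc_succ_top (by omega), Fi_succ]
    have h1 := Fi_nonneg m d hd hu M
    have := hd (M + 1) (by omega)
    have h2 := pf_nonneg m (y := d (M + 1) * u) (by positivity)
    nlinarith

lemma Fi_integrable (hd : ∀ j, 1 ≤ j → 0 < d j) (M : ℕ) :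
    IntegrableOn (Fi m d M) (Set.Ioi 0) := by
  have hg : IntegrableOn (fun u => ∑ j ∈ Finset.Icc 1 M,
      (∑ i ∈ Finset.range m, (2 : ℝ) ^ i) * Real.exp (-(d j / 2) * u)) (Set.Ioi 0) := by
    refine integrable_finsetSum _ fun j hj => ?_
    have := hd j (Finset.mem_Icc.1 hj).1
    exact (exp_neg_integrableOn_Ioi 0 (by positivity)).const_mul _
  refine Integrable.mono' hg (Fi_continuous m d M).aestronglyMeasurable ?_
  refine (ae_restrict_iff' measurableSet_Ioi).2 (Eventually.of_forall fun u hu => ?_)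
  have hu : 0 < u := hu
  rw [Real.norm_of_nonneg (Fi_nonneg m d hd hu M)]
  refine (Fi_le_sum m d hd hu M).trans (Finset.sum_le_sum fun j hj => ?_)
  have := hd j (Finset.mem_Icc.1 hj).1
  have h := pf_le m (y := d j * u) (by positivity)
  rwa [show -(d j * u / 2) = -(d j / 2) * u by ring] at h

lemma L1_mono (hd : ∀ j, 1 ≤ j → 0 < d j) : Monotone (fun M => L1 m d M) := by
  refine monotone_nat_of_le_succ fun M => ?_
  rw [L1_eq, L1_eq]
  exact setIntegral_mono_on (Fi_integrable m d hd M) (Fi_integrable m d hd (M + 1))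
    measurableSet_Ioi fun u hu => Fi_le_succ m d hd hu M

lemma exists_lower (hd : ∀ j, 1 ≤ j → 0 < d j) (N : ℕ) :
    ∃ c > 0, ∀ j, 1 ≤ j → j ≤ N → c ≤ d j := by
  induction N with
  | zero => exact ⟨1, one_pos, fun j h1 h2 => by omega⟩
  | succ N ih =>
    obtain ⟨c, hc, h⟩ := ih
    refine ⟨min c (d (N + 1)), lt_min hc (hd _ (by omega)), fun j h1 h2 => ?_⟩
    rcases Nat.lt_or_ge N j with h3 | h3
    · obtain rfl : j = N + 1 := by omega
      exact min_le_right _ _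
    · exact (min_le_left _ _).trans (h j h1 h3)

lemma L1_bdd (hd : ∀ j, 1 ≤ j → 0 < d j) {ξ : ℝ} (hξ : 0 < ξ)
    (hs : Summable (fun j => Real.exp (-(d j * ξ)))) : ∃ B, ∀ M, L1 m d M ≤ B := by
  obtain ⟨c, hc, hcd⟩ : ∃ c > 0, ∀ j, 1 ≤ j → c ≤ d j := by
    have h0 := hs.tendsto_atTop_zero.eventually (gt_mem_nhds (Real.exp_pos (-1)))
    obtain ⟨N, hN⟩ := eventually_atTop.1 h0
    obtain ⟨c, hc, h⟩ := exists_lower d hd N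
    refine ⟨min c (1 / ξ), lt_min hc (by positivity), fun j hj => ?_⟩
    rcases le_total j N with h3 | h3
    · exact (min_le_left _ _).trans (h j hj h3)
    · refine (min_le_right _ _).trans ?_
      have := Real.exp_lt_exp.1 (hN j h3)
      rw [div_le_iff₀ hξ]
      linarith
  set C : ℝ := ∑ i ∈ Finset.range m, (2 : ℝ) ^ i with hC
  have hC0 : 0 ≤ C := by positivity
  set T : ℝ := ∑' j, Real.exp (-(d j * ξ)) with hT
  have hT0 : 0 ≤ T := tsum_nonneg fun j => (Real.exp_pos _).le
  set K : ℝ := (1 + C * T) * Real.exp (c * ξ) with hK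
  refine ⟨∫ u in Set.Ioi (0 : ℝ), K * Real.exp (-(c / 2) * u), fun M => ?_⟩
  rw [L1_eq]
  refine setIntegral_mono_on (Fi_integrable m d hd M)
    ((exp_neg_integrableOn_Ioi 0 (by positivity)).const_mul _) measurableSet_Ioi fun u hu => ?_
  have hu : 0 < u := hu
  have hKe : K * Real.exp (-(c / 2) * u) = (1 + C * T) * Real.exp (-(c * (u / 2 - ξ))) := by
    rw [hK, mul_assoc, ← Real.exp_add]; congr 2; ring
  rw [hKe]
  rcases le_total u (2 * ξ) with h | h
  · have h1 : 1 ≤ Real.exp (-(c * (u / 2 - ξ))) := by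
      apply Real.one_le_exp
      nlinarith
    have h2 := Fi_le_one m d hd hu M
    have : 0 ≤ C * T := by positivity
    nlinarith
  · have h1 : ∀ j ∈ Finset.Icc 1 M, pf m (d j * u) ≤
        C * Real.exp (-(c * (u / 2 - ξ))) * Real.exp (-(d j * ξ)) := by
      intro j hj
      have hj1 := (Finset.mem_Icc.1 hj).1
      have := hd j hj1
      refine (pf_le m (y := d j * u) (by positivity)).trans ?_
      rw [mul_assoc, ← Real.exp_add]
      refine mul_le_mul_of_nonneg_left (Real.exp_le_exp.2 ?_) hC0
      have := hcd j hj1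
      nlinarith
    calc Fi m d M u ≤ _ := Fi_le_sum m d hd hu M
      _ ≤ _ := Finset.sum_le_sum h1
      _ = C * Real.exp (-(c * (u / 2 - ξ))) * ∑ j ∈ Finset.Icc 1 M, Real.exp (-(d j * ξ)) := by
        rw [Finset.mul_sum]
      _ ≤ C * Real.exp (-(c * (u / 2 - ξ))) * T :=
        mul_le_mul_of_nonneg_left (hs.sum_le_tsum _ fun j _ => (Real.exp_pos _).le)
          (by positivity)
      _ ≤ _ := by
        have := Real.exp_pos (-(c * (u / 2 - ξ)))
        nlinarith

lemma Fi_tendsto (hm : 1 ≤ m) (hd : ∀ j, 1 ≤ j → 0 < d j) {u : ℝ} (hu : 0 < u)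
    (hs : ¬ Summable (fun j => Real.exp (-(d j * u)))) :
    Tendsto (fun M => Fi m d M u) atTop (nhds 1) := by
  have hs' : ¬ Summable (fun j => Real.exp (-(d (j + 1) * u))) := by
    rwa [summable_nat_add_iff 1 (f := fun j => Real.exp (-(d j * u)))]
  have ht := (not_summable_iff_tendsto_nat_atTop_of_nonneg
    (fun j => (Real.exp_pos _).le)).1 hs'
  have hl : Tendsto (fun M => 1 - Real.exp (-∑ j ∈ Finset.range M, Real.exp (-(d (j + 1) * u))))
      atTop (nhds 1) := by
    have := (Real.tendsto_exp_neg_atTop_nhds_zero.comp ht).const_sub 1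
    simpa using this
  refine tendsto_of_tendsto_of_tendsto_of_le_of_le hl tendsto_const_nhds (fun M => ?_)
    (fun M => Fi_le_one m d hd hu M)
  have : ∏ j ∈ Finset.Icc 1 M, (1 - pf m (d j * u)) ≤
      Real.exp (-∑ j ∈ Finset.range M, Real.exp (-(d (j + 1) * u))) := by
    have hr : ∑ j ∈ Finset.range M, Real.exp (-(d (j + 1) * u)) =
        ∑ j ∈ Finset.Icc 1 M, Real.exp (-(d j * u)) := by
      clear hl ht
      induction M with
      | zero => simp
      | succ M ih => rw [Finset.sum_range_succ, Finset.sum_Icc_succ_top (by omega), ih]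
    rw [hr, ← Finset.sum_neg_distrib, Real.exp_sum]
    refine Finset.prod_le_prod (fun j hj => ?_) fun j hj => ?_
    · have := hd j (Finset.mem_Icc.1 hj).1
      have := pf_le_one m (y := d j * u) (by positivity)
      linarith
    · have := hd j (Finset.mem_Icc.1 hj).1
      have h1 := exp_le_pf m hm (y := d j * u) (by positivity)
      have h2 := Real.add_one_le_exp (-Real.exp (-(d j * u)))
      linarith
  simp only [Fi]
  linarith

lemma L1_atTop (hm : 1 ≤ m) (hd : ∀ j, 1 ≤ j → 0 < d j)
    (hs : ∀ ξ > (0 : ℝ), ¬ Summable (fun j => Real.exp (-(d j * ξ)))) :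
    Tendsto (fun M => L1 m d M) atTop atTop := by
  refine tendsto_atTop.2 fun b => ?_
  set R : ℝ := |b| + 1 with hR
  have hR0 : 0 < R := by positivity
  have ht : Tendsto (fun M => ∫ u in Set.Ioc 0 R, Fi m d M u) atTop
      (nhds (∫ u in Set.Ioc 0 R, (1 : ℝ))) := by
    refine tendsto_integral_of_dominated_convergence (fun _ => (1 : ℝ))
      (fun M => (Fi_continuous m d M).aestronglyMeasurable) (integrable_const _) (fun M => ?_) ?_
    · refine (ae_restrict_iff' measurableSet_Ioc).2 (Eventually.of_forall fun u hu => ?_)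
      rw [Real.norm_of_nonneg (Fi_nonneg m d hd hu.1 M)]
      exact Fi_le_one m d hd hu.1 M
    · refine (ae_restrict_iff' measurableSet_Ioc).2 (Eventually.of_forall fun u hu => ?_)
      exact Fi_tendsto m d hm hd hu.1 (hs u hu.1)
  have hv : ∫ u in Set.Ioc 0 R, (1 : ℝ) = R := by
    simp [hR0.le]
  rw [hv] at ht
  have hb : b < R := by have := le_abs_self b; linarith
  filter_upwards [ht.eventually (lt_mem_nhds hb)] with M hM
  refine hM.le.trans ?_
  rw [L1_eq]
  refine setIntegral_mono_set (Fi_integrable m d hd M) ?_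
    (Set.Ioc_subset_Ioi_self.eventuallyLE)
  exact (ae_restrict_iff' measurableSet_Ioi).2
    (Eventually.of_forall fun u hu => Fi_nonneg m d hd hu M)

end

theorem L1_dichotomy
    (m : ℕ) (hm : 1 ≤ m) (d : ℕ → ℝ) (hd : ∀ j, 1 ≤ j → 0 < d j) :
    ((∃ L : ℝ, Tendsto (fun M => L1 m d M) atTop (nhds L)) ↔
      ∃ ξ > (0 : ℝ), Summable (fun j => Real.exp (-(d j * ξ)))) ∧
    (Tendsto (fun M => L1 m d M) atTop atTop ↔
      ∀ ξ > (0 : ℝ), ¬ Summable (fun j => Real.exp (-(d j * ξ)))) := by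
  have hA : (∃ ξ > (0 : ℝ), Summable (fun j => Real.exp (-(d j * ξ)))) →
      ∃ L : ℝ, Tendsto (fun M => L1 m d M) atTop (nhds L) := by
    rintro ⟨ξ, hξ, hs⟩
    obtain ⟨B, hB⟩ := L1_bdd m d hd hξ hs
    exact ⟨_, tendsto_atTop_ciSup (L1_mono m d hd) ⟨B, by rintro _ ⟨M, rfl⟩; exact hB M⟩⟩
  have hB := L1_atTop m d hm hd
  have hAB : (∃ L : ℝ, Tendsto (fun M => L1 m d M) atTop (nhds L)) →
      ¬ Tendsto (fun M => L1 m d M) atTop atTop := by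
    rintro ⟨L, hL⟩ h
    exact not_tendsto_nhds_of_tendsto_atTop h L hL
  refine ⟨⟨fun h => ?_, hA⟩, ⟨fun h ξ hξ hs => hAB (hA ⟨ξ, hξ, hs⟩) h, hB⟩⟩
  by_contra hn
  exact hAB h (hB fun ξ hξ hs => hn ⟨ξ, hξ, hs⟩)
end

section
/- Let f satisfy the stated regularity conditions, let d_j = 1/f(j), m ≥ 1 an integer, and set L₁(M;δ) = ∫_0^∞ [1 − ∏_{j=1}^M (1 − S_m(d_j u) e^{−d_j u})] du. Then, as M → ∞, L₁(M;δ) ∼ f(M) · ln(f(M)/f′(M)). -/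
open MeasureTheory Filter

lemma G_hasDeriv (f : ℝ → ℝ) (x B : ℝ) (hB : 0 < B) (h0 : 0 < f x) (h1 : 0 < deriv f x)
    (hd1 : DifferentiableAt ℝ f x) (hd2 : DifferentiableAt ℝ (deriv f) x) :
    HasDerivAt (fun x => f x ^ 2 / deriv f x / B * Real.exp (-(B / f x)))
      (Real.exp (-(B / f x)) *
        (1 + f x * (2 - deriv (deriv f) x * f x / (deriv f x) ^ 2) / B)) x := by
  have a1 := hd1.hasDerivAt
  have a2 := hd2.hasDerivAt
  have h2 := (((a1.fun_pow 2).fun_div a2 h1.ne').div_const B).fun_mul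
    (((hasDerivAt_const x B).fun_div a1 h0.ne').fun_neg.exp)
  refine h2.congr_deriv ?_
  have := h0.ne'
  have := h1.ne'
  field_simp
  ring

lemma G_step (f : ℝ → ℝ) (j K B : ℝ) (hj : 0 < j) (hB : 0 < B)
    (hfpos : ∀ x > (0 : ℝ), 0 < f x)
    (hf'pos : ∀ x > (0 : ℝ), 0 < deriv f x)
    (hfdiff : ∀ x > (0 : ℝ), DifferentiableAt ℝ f x)
    (hfdiff2 : ∀ x > (0 : ℝ), DifferentiableAt ℝ (deriv f) x)
    (hmono : ∀ x y, 0 < x → x ≤ y → f x ≤ f y)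
    (hK : ∀ x, j ≤ x → |2 - deriv (deriv f) x * f x / (deriv f x) ^ 2| ≤ K)
    (hKB : 2 * K * f (j + 1) ≤ B) :
    let G := fun x => f x ^ 2 / deriv f x / B * Real.exp (-(B / f x))
    Real.exp (-(B / f j)) ≤ 2 * (G (j + 1) - G j) ∧
    G (j + 1) - G j ≤ 2 * Real.exp (-(B / f (j + 1))) := by
  intro G
  obtain ⟨x, ⟨hx1, hx2⟩, hx⟩ := exists_hasDerivAt_eq_slope G
    (fun x => Real.exp (-(B / f x)) *
        (1 + f x * (2 - deriv (deriv f) x * f x / (deriv f x) ^ 2) / B))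
    (show j < j + 1 by linarith)
    (fun x hx => (G_hasDeriv f x B hB (hfpos x (hj.trans_le hx.1)) (hf'pos x (hj.trans_le hx.1))
      (hfdiff x (hj.trans_le hx.1)) (hfdiff2 x (hj.trans_le hx.1))).continuousAt.continuousWithinAt)
    (fun x hx => G_hasDeriv f x B hB (hfpos x (hj.trans hx.1)) (hf'pos x (hj.trans hx.1))
      (hfdiff x (hj.trans hx.1)) (hfdiff2 x (hj.trans hx.1)))
  have hx0 : 0 < x := hj.trans hx1
  have e : G (j + 1) - G j = Real.exp (-(B / f x)) *
        (1 + f x * (2 - deriv (deriv f) x * f x / (deriv f x) ^ 2) / B) := by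
    rw [hx]; simp
  rw [e]
  set q := 2 - deriv (deriv f) x * f x / (deriv f x) ^ 2 with hq
  have hqK := hK x hx1.le
  have hfx := hfpos x hx0
  have hfle := hmono x (j + 1) hx0 hx2.le
  have hK0 : 0 ≤ K := (abs_nonneg _).trans hqK
  have hb : |f x * q / B| ≤ 1 / 2 := by
    rw [abs_div, abs_mul, abs_of_pos hfx, abs_of_pos hB, div_le_iff₀ hB]
    calc f x * |q| ≤ f (j + 1) * K := by gcongr; exact hfx.le.trans hfle
      _ ≤ _ := by linarith
  rw [abs_le] at hb
  have e1 : Real.exp (-(B / f j)) ≤ Real.exp (-(B / f x)) := by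
    have := hfpos j hj
    have := hmono j x hj hx1.le
    gcongr
  have e2 : Real.exp (-(B / f x)) ≤ Real.exp (-(B / f (j + 1))) := by
    gcongr
  have := Real.exp_pos (-(B / f x))
  constructor <;> nlinarith

lemma key (f : ℝ → ℝ)
    (hfpos : ∀ x > (0 : ℝ), 0 < f x)
    (hf'pos : ∀ x > (0 : ℝ), 0 < deriv f x)
    (hfdiff : ∀ x > (0 : ℝ), DifferentiableAt ℝ f x)
    (hfdiff2 : ∀ x > (0 : ℝ), DifferentiableAt ℝ (deriv f) x)
    (hmono : ∀ x y, 0 < x → x ≤ y → f x ≤ f y)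
    (hfiii : (fun x => deriv (deriv f) x * f x / (deriv f x) ^ 2) =O[atTop]
      (fun _ => (1 : ℝ))) :
    ∃ a : ℕ, ∃ K D : ℝ, 0 < a ∧ ∀ M : ℕ, a ≤ M → ∀ β : ℝ, 1 ≤ β → K ≤ β → 1 ≤ f M →
      (∑ j ∈ Finset.Icc 1 M, Real.exp (-(β * f M / f j)) ≤
        a * Real.exp (-β) + 2 * (f M / deriv f M / β * Real.exp (-β))) ∧
      (f M / deriv f M / β * Real.exp (-β) - D) / 2 ≤
        ∑ j ∈ Finset.Icc 1 M, Real.exp (-(β * f M / f j)) := by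
  obtain ⟨C, hC⟩ := hfiii.bound
  obtain ⟨x0, hx0⟩ := Filter.eventually_atTop.1 hC
  obtain ⟨a0, ha0⟩ := exists_nat_ge x0
  set a := a0 + 1 with ha
  have hax : ∀ x : ℝ, (a : ℝ) ≤ x → |2 - deriv (deriv f) x * f x / (deriv f x) ^ 2| ≤ 2 + C := by
    intro x hx
    have h := hx0 x (by push_cast [ha] at hx; linarith)
    simp only [norm_one, mul_one, Real.norm_eq_abs] at h
    have := abs_sub (2 : ℝ) (deriv (deriv f) x * f x / (deriv f x) ^ 2)
    simp only [abs_two] at this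
    linarith
  have hapos : (0 : ℝ) < a := by positivity
  refine ⟨a, 2 * (2 + C), f a ^ 2 / deriv f a, by positivity, ?_⟩
  intro M hM β hβ1 hβK hfM
  set B := β * f M with hBdef
  have hB1 : 1 ≤ B := by nlinarith
  have hB : 0 < B := by linarith
  set G := fun x => f x ^ 2 / deriv f x / B * Real.exp (-(B / f x)) with hG
  have hGnn : ∀ x > 0, 0 ≤ G x := fun x hx => by
    have := hf'pos x hx
    simp only [hG]; positivity
  have hstep : ∀ N : ℕ, a ≤ N → N + 1 ≤ M → Real.exp (-(B / f N)) ≤ 2 * (G (N + 1) - G N) ∧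
    G (N + 1) - G N ≤ 2 * Real.exp (-(B / f ((N : ℝ) + 1))) := by
    intro N hN hNM
    have hN' : (a : ℝ) ≤ N := by exact_mod_cast hN
    have hNM' : (N : ℝ) + 1 ≤ M := by exact_mod_cast hNM
    refine G_step f N (2 + C) B (by linarith) hB hfpos hf'pos hfdiff hfdiff2 hmono
      (fun x hx => hax x (hN'.trans hx)) ?_
    have h1 := hmono (N + 1) M (by positivity) hNM'
    have h2 : 0 ≤ 2 + C := (abs_nonneg _).trans (hax a le_rfl)
    calc 2 * (2 + C) * f (N + 1) ≤ 2 * (2 + C) * f M := by gcongr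
      _ ≤ β * f M := by gcongr
  have hmh : ∀ x y : ℝ, 0 < x → x ≤ y → Real.exp (-(B / f x)) ≤ Real.exp (-(B / f y)) := by
    intro x y hx hxy
    have := hfpos x hx
    have := hmono x y hx hxy
    gcongr
  have hGM : G M = f M / deriv f M / β * Real.exp (-β) := by
    simp only [hG, hBdef]
    have : 0 < f M := by linarith
    have : 0 < deriv f M := hf'pos _ (by
      have : (a : ℝ) ≤ M := by exact_mod_cast hM
      linarith)
    have : β * f M / f M = β := by field_simp
    rw [this]
    field_simp
  have hhM : Real.exp (-(B / f M)) = Real.exp (-β) := by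
    congr 2
    have : 0 < f M := by linarith
    rw [hBdef]; field_simp
  have U : ∀ N, a ≤ N → N ≤ M → ∑ j ∈ Finset.Icc 1 N, Real.exp (-(B / f j)) ≤
      a * Real.exp (-(B / f N)) + 2 * (G N - G a) := by
    intro N hN
    induction N, hN using Nat.le_induction with
    | base =>
      intro _
      have : ∑ j ∈ Finset.Icc 1 a, Real.exp (-(B / f j)) ≤
          ∑ j ∈ Finset.Icc 1 a, Real.exp (-(B / f a)) := by
        refine Finset.sum_le_sum fun j hj => ?_
        rw [Finset.mem_Icc] at hj
        exact hmh j a (by exact_mod_cast hj.1) (by exact_mod_cast hj.2)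
      simp only [Finset.sum_const, Nat.card_Icc, nsmul_eq_mul, Nat.add_sub_cancel] at this
      linarith
    | succ N hN ih =>
      intro hNM
      have ih := ih (by omega)
      rw [Finset.sum_Icc_succ_top (by omega)]
      have h1 := (hstep N hN hNM).1
      have hN' : (a : ℝ) ≤ N := by exact_mod_cast hN
      have h2 := hmh N (N + 1) (by linarith) (by linarith)
      have h3 : (1 : ℝ) ≤ a := by rw [ha]; push_cast; linarith [(Nat.cast_nonneg a0 : (0 : ℝ) ≤ a0)]
      push_cast
      nlinarith
  have L : ∀ N, a ≤ N → N ≤ M → (G N - G a) / 2 ≤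
      ∑ j ∈ Finset.Icc 1 N, Real.exp (-(B / f j)) := by
    intro N hN
    induction N, hN using Nat.le_induction with
    | base =>
      intro _
      simp only [sub_self, zero_div]
      positivity
    | succ N hN ih =>
      intro hNM
      have ih := ih (by omega)
      rw [Finset.sum_Icc_succ_top (by omega)]
      have h1 := (hstep N hN hNM).2
      push_cast
      linarith
  have hU := U M hM le_rfl
  have hL := L M hM le_rfl
  rw [hhM, hGM] at hU
  rw [hGM] at hL
  have hGa : G a ≤ f a ^ 2 / deriv f a := by
    simp only [hG]
    have h1 := hf'pos a hapos
    have h2 := hfpos a hapos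
    have h3 : Real.exp (-(B / f a)) ≤ 1 := Real.exp_le_one_iff.2 (by
      have : 0 ≤ B / f a := by positivity
      linarith)
    calc f a ^ 2 / deriv f a / B * Real.exp (-(B / f a)) ≤ f a ^ 2 / deriv f a / 1 * 1 := by gcongr
      _ = _ := by ring
  constructor
  · linarith [hGnn a hapos]
  · linarith

lemma Q_nonneg (m : ℕ) (y : ℝ) (hy : 0 ≤ y) : 0 ≤ Sm m y * Real.exp (-y) := by
  unfold Sm; positivity

lemma Q_le_one (m : ℕ) (y : ℝ) (hy : 0 ≤ y) : Sm m y * Real.exp (-y) ≤ 1 := by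
  have := Real.sum_le_exp_of_nonneg hy m
  rw [Real.exp_neg, ← div_eq_mul_inv, div_le_one (Real.exp_pos _)]
  exact this

lemma Q_ge (m : ℕ) (hm : 1 ≤ m) (y : ℝ) (hy : 0 ≤ y) : Real.exp (-y) ≤ Sm m y * Real.exp (-y) := by
  have : 1 ≤ Sm m y := by
    have := Finset.single_le_sum (f := fun i : ℕ => y ^ i / (Nat.factorial i : ℝ))
      (s := Finset.range m) (fun i _ => by positivity) (Finset.mem_range.2 hm)
    simpa [Sm] using this
  nlinarith [Real.exp_pos (-y)]

lemma Q_le (m : ℕ) (k : ℝ) (hk : k < 1) : ∃ C : ℝ, 0 ≤ C ∧ ∀ y, 0 ≤ y →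
    Sm m y * Real.exp (-y) ≤ C * Real.exp (-(k * y)) := by
  have hη : 0 < 1 - k := by linarith
  refine ⟨∑ i ∈ Finset.range m, ((1 - k) ^ i)⁻¹, by positivity, fun y hy => ?_⟩
  have h1 : Sm m y ≤ (∑ i ∈ Finset.range m, ((1 - k) ^ i)⁻¹) * Real.exp ((1 - k) * y) := by
    rw [Finset.sum_mul]
    refine Finset.sum_le_sum fun i _ => ?_
    have := Real.pow_div_factorial_le_exp ((1 - k) * y) (by positivity) i
    rw [mul_pow, mul_div_assoc] at this
    rw [inv_mul_eq_div, le_div_iff₀ (by positivity)]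
    linarith
  calc Sm m y * Real.exp (-y) ≤
      (∑ i ∈ Finset.range m, ((1 - k) ^ i)⁻¹) * Real.exp ((1 - k) * y) * Real.exp (-y) := by gcongr
    _ = _ := by rw [mul_assoc, ← Real.exp_add]; ring_nf

lemma one_sub_prod_le (s : Finset ℕ) (q : ℕ → ℝ) (h0 : ∀ j ∈ s, 0 ≤ q j) (h1 : ∀ j ∈ s, q j ≤ 1) :
    1 - ∏ j ∈ s, (1 - q j) ≤ ∑ j ∈ s, q j := by
  induction s using Finset.induction_on with
  | empty => simp
  | insert a s ha ih =>
    rw [Finset.prod_insert ha, Finset.sum_insert ha]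
    have ih := ih (fun j hj => h0 j (Finset.mem_insert_of_mem hj))
      (fun j hj => h1 j (Finset.mem_insert_of_mem hj))
    have hp : ∏ j ∈ s, (1 - q j) ≤ 1 := Finset.prod_le_one
      (fun j hj => by linarith [h1 j (Finset.mem_insert_of_mem hj)])
      (fun j hj => by linarith [h0 j (Finset.mem_insert_of_mem hj)])
    have := h0 a (Finset.mem_insert_self _ _)
    nlinarith

/-- The integrand. -/
noncomputable def Fint (m : ℕ) (d : ℕ → ℝ) (M : ℕ) (u : ℝ) : ℝ :=
    (1 - ∏ j ∈ Finset.Icc 1 M, (1 - Sm m (d j * u) * Real.exp (-(d j * u))))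

lemma Fint_cont (m : ℕ) (d : ℕ → ℝ) (M : ℕ) : Continuous (Fint m d M) := by
  unfold Fint Sm
  fun_prop

lemma Fint_nonneg (m : ℕ) (d : ℕ → ℝ) (M : ℕ) (hd : ∀ j ∈ Finset.Icc 1 M, 0 < d j) (u : ℝ)
    (hu : 0 ≤ u) : 0 ≤ Fint m d M u := by
  have : ∏ j ∈ Finset.Icc 1 M, (1 - Sm m (d j * u) * Real.exp (-(d j * u))) ≤ 1 :=
    Finset.prod_le_one
      (fun j hj => by linarith [Q_le_one m (d j * u) (mul_nonneg (hd j hj).le hu)])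
      (fun j hj => by linarith [Q_nonneg m (d j * u) (mul_nonneg (hd j hj).le hu)])
  unfold Fint; linarith

lemma Fint_le_one (m : ℕ) (d : ℕ → ℝ) (M : ℕ) (hd : ∀ j ∈ Finset.Icc 1 M, 0 < d j) (u : ℝ)
    (hu : 0 ≤ u) : Fint m d M u ≤ 1 := by
  have : 0 ≤ ∏ j ∈ Finset.Icc 1 M, (1 - Sm m (d j * u) * Real.exp (-(d j * u))) :=
    Finset.prod_nonneg
      (fun j hj => by linarith [Q_le_one m (d j * u) (mul_nonneg (hd j hj).le hu)])
  unfold Fint; linarith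

lemma Fint_le (m : ℕ) (d : ℕ → ℝ) (M : ℕ) (hd : ∀ j ∈ Finset.Icc 1 M, 0 < d j) (C k : ℝ)
    (hC : ∀ y, 0 ≤ y → Sm m y * Real.exp (-y) ≤ C * Real.exp (-(k * y)))
    (u : ℝ) (hu : 0 ≤ u) :
    Fint m d M u ≤ ∑ j ∈ Finset.Icc 1 M, C * Real.exp (-(k * d j) * u) := by
  refine (one_sub_prod_le _ _
      (fun j hj => Q_nonneg m (d j * u) (mul_nonneg (hd j hj).le hu))
      (fun j hj => Q_le_one m (d j * u) (mul_nonneg (hd j hj).le hu))).trans ?_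
  refine Finset.sum_le_sum fun j hj => (hC _ (mul_nonneg (hd j hj).le hu)).trans_eq ?_
  congr 2; ring

lemma sum_integrable (d : ℕ → ℝ) (M : ℕ) (hd : ∀ j ∈ Finset.Icc 1 M, 0 < d j) (C k : ℝ)
    (hk : 0 < k) (c : ℝ) :
    IntegrableOn (fun u => ∑ j ∈ Finset.Icc 1 M, C * Real.exp (-(k * d j) * u)) (Set.Ioi c) := by
  refine integrable_finsetSum _ fun j hj => ?_
  have := mul_pos hk (hd j hj)
  exact (integrableOn_exp_mul_Ioi (by linarith) c).const_mul C

lemma Fint_integrable (m : ℕ) (d : ℕ → ℝ) (M : ℕ) (hd : ∀ j ∈ Finset.Icc 1 M, 0 < d j) :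
    IntegrableOn (Fint m d M) (Set.Ioi 0) := by
  obtain ⟨C, hC0, hC⟩ := Q_le m (1 / 2) (by norm_num)
  refine (sum_integrable d M hd C (1 / 2) (by norm_num) 0).mono'
    (Fint_cont m d M).aestronglyMeasurable ?_
  refine (ae_restrict_iff' measurableSet_Ioi).2 (.of_forall fun u hu => ?_)
  rw [Real.norm_of_nonneg (Fint_nonneg m d M hd u (le_of_lt hu))]
  exact Fint_le m d M hd C _ hC u (le_of_lt hu)

lemma L1_split (m : ℕ) (d : ℕ → ℝ) (M : ℕ) (hd : ∀ j ∈ Finset.Icc 1 M, 0 < d j)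
    (c : ℝ) (hc : 0 ≤ c) :
    L1 m d M = (∫ u in Set.Ioc 0 c, Fint m d M u) + ∫ u in Set.Ioi c, Fint m d M u := by
  have hI := Fint_integrable m d M hd
  rw [← setIntegral_union (Set.Ioc_disjoint_Ioi le_rfl) measurableSet_Ioi
    (hI.mono_set Set.Ioc_subset_Ioi_self) (hI.mono_set (Set.Ioi_subset_Ioi hc)),
    Set.Ioc_union_Ioi_eq_Ioi hc]
  rfl

lemma L1_lower (m : ℕ) (hm : 1 ≤ m) (d : ℕ → ℝ) (M : ℕ) (hd : ∀ j ∈ Finset.Icc 1 M, 0 < d j)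
    (c : ℝ) (hc : 0 ≤ c) :
    c * (1 - Real.exp (-∑ j ∈ Finset.Icc 1 M, Real.exp (-(d j * c)))) ≤ L1 m d M := by
  rw [L1_split m d M hd c hc]
  have hI := Fint_integrable m d M hd
  have h2 : 0 ≤ ∫ u in Set.Ioi c, Fint m d M u :=
    setIntegral_nonneg measurableSet_Ioi fun u hu => Fint_nonneg m d M hd u (hc.trans (le_of_lt hu))
  have h1 : ∫ u in Set.Ioc 0 c, (1 - Real.exp (-∑ j ∈ Finset.Icc 1 M, Real.exp (-(d j * c)))) ≤
      ∫ u in Set.Ioc 0 c, Fint m d M u := by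
    refine setIntegral_mono_on (by simp) (hI.mono_set Set.Ioc_subset_Ioi_self)
      measurableSet_Ioc fun u hu => ?_
    unfold Fint
    rw [← Finset.sum_neg_distrib, Real.exp_sum]
    refine sub_le_sub_left (Finset.prod_le_prod (fun j hj => ?_) (fun j hj => ?_)) 1
    · linarith [Q_le_one m (d j * u) (mul_nonneg (hd j hj).le hu.1.le)]
    · have a1 := Q_ge m hm (d j * u) (mul_nonneg (hd j hj).le hu.1.le)
      have a2 : Real.exp (-(d j * c)) ≤ Real.exp (-(d j * u)) := by
        have := hd j hj
        have := hu.2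
        gcongr
      have a3 := Real.add_one_le_exp (-Real.exp (-(d j * c)))
      linarith
  simp [hc] at h1
  linarith

lemma L1_upper (m : ℕ) (d : ℕ → ℝ) (M : ℕ) (hd : ∀ j ∈ Finset.Icc 1 M, 0 < d j)
    (C k : ℝ) (hk : 0 < k)
    (hC : ∀ y, 0 ≤ y → Sm m y * Real.exp (-y) ≤ C * Real.exp (-(k * y)))
    (c : ℝ) (hc : 0 ≤ c) :
    L1 m d M ≤ c + ∑ j ∈ Finset.Icc 1 M, C * (Real.exp (-(k * d j * c)) / (k * d j)) := by
  rw [L1_split m d M hd c hc]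
  have hI := Fint_integrable m d M hd
  have h1 : ∫ u in Set.Ioc 0 c, Fint m d M u ≤ ∫ u in Set.Ioc 0 c, (1 : ℝ) :=
    setIntegral_mono_on (hI.mono_set Set.Ioc_subset_Ioi_self) (by simp)
      measurableSet_Ioc fun u hu => Fint_le_one m d M hd u hu.1.le
  have h2 : ∫ u in Set.Ioi c, Fint m d M u ≤
      ∫ u in Set.Ioi c, ∑ j ∈ Finset.Icc 1 M, C * Real.exp (-(k * d j) * u) :=
    setIntegral_mono_on (hI.mono_set (Set.Ioi_subset_Ioi hc)) (sum_integrable d M hd C k hk c)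
      measurableSet_Ioi fun u hu => Fint_le m d M hd C k hC u (hc.trans (le_of_lt hu))
  have h3 : ∫ u in Set.Ioi c, ∑ j ∈ Finset.Icc 1 M, C * Real.exp (-(k * d j) * u) =
      ∑ j ∈ Finset.Icc 1 M, C * (Real.exp (-(k * d j * c)) / (k * d j)) := by
    rw [integral_finsetSum]
    · refine Finset.sum_congr rfl fun j hj => ?_
      have := mul_pos hk (hd j hj)
      rw [integral_const_mul, integral_exp_mul_Ioi (by linarith)]
      rw [neg_div_neg_eq, neg_mul]
    · intro j hj
      have := mul_pos hk (hd j hj)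
      exact (integrableOn_exp_mul_Ioi (by linarith) c).const_mul C
  simp [hc] at h1
  linarith

theorem L1_asymptotics
    (m : ℕ) (hm : 1 ≤ m)
    (f : ℝ → ℝ)
    (hfpos : ∀ x > (0 : ℝ), 0 < f x)
    (hf'pos : ∀ x > (0 : ℝ), 0 < deriv f x)
    (hfdiff : ∀ x > (0 : ℝ), DifferentiableAt ℝ f x)
    (hfdiff2 : ∀ x > (0 : ℝ), DifferentiableAt ℝ (deriv f) x)
    (hfdiff3 : ∀ x > (0 : ℝ), DifferentiableAt ℝ (deriv (deriv f)) x)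
    (hfi : Tendsto f atTop atTop)
    (hfii : Tendsto (fun x => deriv f x / f x) atTop (nhds 0))
    (hfiii : (fun x => deriv (deriv f) x * f x / (deriv f x) ^ 2) =O[atTop]
      (fun _ => (1 : ℝ)))
    (hfiv : (fun x => deriv (deriv (deriv f)) x * (f x) ^ 2 / (deriv f x) ^ 3) =O[atTop]
      (fun _ => (1 : ℝ)))
    (d : ℕ → ℝ) (hd : ∀ j, 1 ≤ j → d j = 1 / f j) :
    Tendsto (fun M : ℕ =>
        L1 m d M / (f M * Real.log (f M / deriv f M))) atTop (nhds 1) := by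
  have hmono : ∀ x y, 0 < x → x ≤ y → f x ≤ f y := by
    have : StrictMonoOn f (Set.Ioi 0) := by
      apply strictMonoOn_of_deriv_pos (convex_Ioi 0)
      · exact fun x hx => (hfdiff x hx).continuousAt.continuousWithinAt
      · intro x hx
        rw [interior_Ioi] at hx
        exact hf'pos x hx
    exact fun x y hx hxy => this.monotoneOn hx (hx.trans_le hxy) hxy
  obtain ⟨a, K, D, ha, hkey⟩ := key f hfpos hf'pos hfdiff hfdiff2 hmono hfiii
  have hcast : Tendsto (fun M : ℕ => (M : ℝ)) atTop atTop := tendsto_natCast_atTop_atTop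
  have hr : Tendsto (fun M : ℕ => f M / deriv f M) atTop atTop := by
    have h0 : Tendsto (fun x => deriv f x / f x) atTop (nhdsWithin 0 (Set.Ioi 0)) := by
      refine tendsto_nhdsWithin_iff.2 ⟨hfii, ?_⟩
      filter_upwards [eventually_gt_atTop 0] with x hx
      exact div_pos (hf'pos x hx) (hfpos x hx)
    refine (h0.inv_tendsto_nhdsGT_zero.comp hcast).congr fun M => ?_
    simp
  have hlam : Tendsto (fun M : ℕ => Real.log (f M / deriv f M)) atTop atTop :=
    Real.tendsto_log_atTop.comp hr
  have hfM : Tendsto (fun M : ℕ => f M) atTop atTop := hfi.comp hcast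
  have hdpos : ∀ M : ℕ, ∀ j ∈ Finset.Icc 1 M, 0 < d j := by
    intro M j hj
    have h1 := (Finset.mem_Icc.1 hj).1
    rw [hd j h1]
    have := hfpos j (by exact_mod_cast h1)
    positivity
  refine tendsto_order.2 ⟨fun b hb => ?_, fun b hb => ?_⟩
  · obtain ⟨c, hc1, hc2⟩ := exists_between (max_lt hb one_pos)
    have hcb : b < c := (le_max_left _ _).trans_lt hc1
    have hc0 : 0 < c := (le_max_right _ _).trans_lt hc1
    set κ := (1 - c) ^ 2 / (2 * c) with hκ
    have hκ0 : 0 < κ := by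
      have : 0 < 1 - c := by linarith
      positivity
    have hlim : Tendsto (fun M : ℕ => c * (1 - Real.exp (-((κ * Real.log (f M / deriv f M) - D) / 2))))
        atTop (nhds c) := by
      have h1 : Tendsto (fun M : ℕ => (κ * Real.log (f M / deriv f M) - D) / 2) atTop atTop :=
        (tendsto_atTop_add_const_right _ (-D) (hlam.const_mul_atTop hκ0)).atTop_div_const two_pos
      have h2 := (Real.tendsto_exp_neg_atTop_nhds_zero.comp h1)
      have h3 := (h2.const_sub 1).const_mul c
      simpa using h3
    filter_upwards [hlim.eventually_const_lt hcb, eventually_ge_atTop a,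
      hlam.eventually_ge_atTop (1 / c), hlam.eventually_ge_atTop (K / c),
      hfM.eventually_ge_atTop 1, hr.eventually_gt_atTop 0] with M hM1 hMa hl1 hlK hf1 hr0
    set lam := Real.log (f M / deriv f M) with hlamdef
    have hlam0 : 0 < lam := (by positivity : 0 < 1 / c).trans_le hl1
    have hf0 : 0 < f M := by linarith
    have hS := (hkey M hMa (c * lam) (by rwa [div_le_iff₀' hc0] at hl1)
      (by rwa [div_le_iff₀' hc0] at hlK) hf1).2
    have hre : f M / deriv f M = Real.exp lam := (Real.exp_log hr0).symm
    have hκle : κ * lam ≤ f M / deriv f M / (c * lam) * Real.exp (-(c * lam)) := by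
      have e1 : f M / deriv f M / (c * lam) * Real.exp (-(c * lam)) =
          Real.exp ((1 - c) * lam) / (c * lam) := by
        rw [hre, div_mul_eq_mul_div, ← Real.exp_add]; ring_nf
      rw [e1, le_div_iff₀ (by positivity)]
      have e2 := Real.pow_div_factorial_le_exp ((1 - c) * lam)
        (mul_nonneg (by linarith) hlam0.le) 2
      have e3 : κ * lam * (c * lam) = ((1 - c) * lam) ^ 2 / (Nat.factorial 2 : ℕ) := by
        rw [hκ]; norm_num [Nat.factorial]; field_simp
      rw [e3]; exact e2
    have hL := L1_lower m hm d M (hdpos M) (c * lam * f M) (by positivity)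
    have hsum : ∑ j ∈ Finset.Icc 1 M, Real.exp (-(d j * (c * lam * f M))) =
        ∑ j ∈ Finset.Icc 1 M, Real.exp (-(c * lam * f M / f j)) := by
      refine Finset.sum_congr rfl fun j hj => ?_
      rw [hd j (Finset.mem_Icc.1 hj).1]; ring_nf
    rw [hsum] at hL
    set S := ∑ j ∈ Finset.Icc 1 M, Real.exp (-(c * lam * f M / f j))
    have hS2 : (κ * lam - D) / 2 ≤ S := by linarith
    have hE : Real.exp (-S) ≤ Real.exp (-((κ * lam - D) / 2)) := by gcongr
    rw [lt_div_iff₀ (by positivity)]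
    calc b * (f M * lam) < c * (1 - Real.exp (-((κ * lam - D) / 2))) * (f M * lam) := by gcongr
      _ ≤ c * (1 - Real.exp (-S)) * (f M * lam) := by gcongr
      _ = c * lam * f M * (1 - Real.exp (-S)) := by ring
      _ ≤ _ := hL
  · obtain ⟨c, hc1, hc2⟩ := exists_between (show 1 < √b from Real.lt_sqrt_of_sq_lt (by linarith))
    have hc0 : 0 < c := by linarith
    have hcb : c ^ 2 < b := (Real.lt_sqrt hc0.le).1 hc2
    obtain ⟨C, hC0, hC⟩ := Q_le m (1 / c) (by rw [div_lt_one hc0]; exact hc1)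
    have hlim : Tendsto (fun M : ℕ => c ^ 2 + C * c * (a + 2) / Real.log (f M / deriv f M))
        atTop (nhds (c ^ 2)) := by
      simpa using (hlam.const_div_atTop (C * c * (a + 2))).const_add (c ^ 2)
    filter_upwards [hlim.eventually_lt_const hcb, eventually_ge_atTop a,
      hlam.eventually_ge_atTop (1 / c), hlam.eventually_ge_atTop (K / c),
      hfM.eventually_ge_atTop 1, hr.eventually_gt_atTop 0] with M hM1 hMa hl1 hlK hf1 hr0
    set lam := Real.log (f M / deriv f M) with hlamdef
    have hlam0 : 0 < lam := (by positivity : 0 < 1 / c).trans_le hl1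
    have hf0 : 0 < f M := by linarith
    have hb1 : 1 ≤ c * lam := by rwa [div_le_iff₀' hc0] at hl1
    have hS := (hkey M hMa (c * lam) hb1 (by rwa [div_le_iff₀' hc0] at hlK) hf1).1
    have hre : f M / deriv f M = Real.exp lam := (Real.exp_log hr0).symm
    have hL := L1_upper m d M (hdpos M) C (1 / c) (by positivity) hC (c ^ 2 * lam * f M)
      (by positivity)
    have hsum : ∑ j ∈ Finset.Icc 1 M, C * (Real.exp (-(1 / c * d j * (c ^ 2 * lam * f M)))
          / (1 / c * d j)) ≤
        ∑ j ∈ Finset.Icc 1 M, C * c * f M * Real.exp (-(c * lam * f M / f j)) := by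
      refine Finset.sum_le_sum fun j hj => ?_
      have hj' := Finset.mem_Icc.1 hj
      have hj0 : (0 : ℝ) < j := by exact_mod_cast hj'.1
      have hfj := hfpos j hj0
      have hle := hmono j M hj0 (by exact_mod_cast hj'.2)
      rw [hd j hj'.1]
      have e1 : 1 / c * (1 / f j) * (c ^ 2 * lam * f M) = c * lam * f M / f j := by
        field_simp
      rw [e1]
      calc C * (Real.exp (-(c * lam * f M / f j)) / (1 / c * (1 / f j)))
          = C * c * f j * Real.exp (-(c * lam * f M / f j)) := by field_simp
        _ ≤ _ := by gcongr
    replace hsum := hsum.trans_eq (Finset.mul_sum _ _ _).symm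
    set S := ∑ j ∈ Finset.Icc 1 M, Real.exp (-(c * lam * f M / f j))
    have hS2 : S ≤ a + 2 := by
      have e0 : Real.exp (-(c * lam)) ≤ 1 := Real.exp_le_one_iff.2 (by linarith)
      have e1 : f M / deriv f M / (c * lam) * Real.exp (-(c * lam)) =
          Real.exp (-((c - 1) * lam)) / (c * lam) := by
        rw [hre, div_mul_eq_mul_div, ← Real.exp_add]; ring_nf
      have e2 : Real.exp (-((c - 1) * lam)) ≤ 1 := Real.exp_le_one_iff.2 (by
        have := mul_nonneg (show 0 ≤ c - 1 by linarith) hlam0.le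
        linarith)
      have e3 : Real.exp (-((c - 1) * lam)) / (c * lam) ≤ 1 :=
        (div_le_one (by positivity)).2 (e2.trans hb1)
      have e4 : (a : ℝ) * Real.exp (-(c * lam)) ≤ a := mul_le_of_le_one_right (by positivity) e0
      rw [e1] at hS
      linarith
    rw [div_lt_iff₀ (by positivity)]
    calc L1 m d M ≤ c ^ 2 * lam * f M + C * c * f M * S := hL.trans (by linarith)
      _ ≤ c ^ 2 * lam * f M + C * c * f M * (a + 2) := by gcongr
      _ = (c ^ 2 + C * c * (a + 2) / lam) * (f M * lam) := by field_simp
      _ < b * (f M * lam) := by gcongr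
end

section
/- (Schur concavity of h.) Let m ≥ 1 be an integer and t > 0 be fixed, and define h(b_1,…,b_M) = ∑_{j=1}^M ln(1 − S_m(b_j t) e^{−b_j t}) for b_1,…,b_M > 0. Then for all i ≠ j, (b_i − b_j)(∂h/∂b_i − ∂h/∂b_j) ≤ 0; equivalently, the function y ↦ ln(1 − S_m(y t) e^{−y t}) is concave on (0,∞), so h is a Schur concave symmetric function and attains its maximum on any simplex {b_j > 0 : ∑ b_j = S} when all b_j are equal. -/
open Filter

theorem Sm_succ (k : ℕ) (y : ℝ) : Sm (k+1) y = Sm k y + y ^ k / (Nat.factorial k) := by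
  simp [Sm, Finset.sum_range_succ]

theorem Sm_hasDerivAt (k : ℕ) (y : ℝ) : HasDerivAt (Sm (k+1)) (Sm k y) y := by
  induction k with
  | zero =>
    have : Sm (0+1) = fun _ => (1:ℝ) := by funext z; simp [Sm]
    rw [this]
    simpa [Sm] using hasDerivAt_const y (1:ℝ)
  | succ k ih =>
    have h : Sm (k+1+1) = fun z => Sm (k+1) z + z ^ (k+1) / (Nat.factorial (k+1)) := by
      funext z; exact Sm_succ _ _
    rw [h, Sm_succ k y]
    refine ih.add ?_
    have h2 := (hasDerivAt_pow (k+1) y).div_const ((Nat.factorial (k+1) : ℝ))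
    refine h2.congr_deriv ?_
    have : (Nat.factorial k : ℝ) ≠ 0 := by positivity
    rw [Nat.factorial_succ]
    push_cast
    have : (k:ℝ) + 1 ≠ 0 := by positivity
    field_simp

/-- The tail of the exponential series. -/
theorem tail_hasSum (m : ℕ) (y : ℝ) :
    HasSum (fun i : ℕ => y ^ (i+m) / (Nat.factorial (i+m) : ℝ)) (Real.exp y - Sm m y) := by
  have h : HasSum (fun i : ℕ => y ^ i / (Nat.factorial i : ℝ)) (Real.exp y) := by
    rw [Real.exp_eq_exp_ℝ]
    exact NormedSpace.expSeries_div_hasSum_exp y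
  exact (hasSum_nat_add_iff' m).2 h

theorem tail_pos (m : ℕ) (y : ℝ) (hy : 0 < y) : 0 < Real.exp y - Sm m y := by
  have h := tail_hasSum m y
  have h0 : y ^ (0+m) / (Nat.factorial (0+m) : ℝ) ≤ Real.exp y - Sm m y :=
    le_hasSum h 0 (fun j _ => by positivity)
  refine lt_of_lt_of_le ?_ h0
  positivity

theorem tail_mono (k : ℕ) (x y : ℝ) (hx : 0 < x) (hxy : x ≤ y) :
    (Real.exp x - Sm (k+1) x) * y ^ k ≤ (Real.exp y - Sm (k+1) y) * x ^ k := by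
  have hy : 0 < y := lt_of_lt_of_le hx hxy
  refine hasSum_le (fun i => ?_) ((tail_hasSum (k+1) x).mul_right (y^k))
    ((tail_hasSum (k+1) y).mul_right (x^k))
  have e1 : x ^ (i+(k+1)) / (Nat.factorial (i+(k+1)) : ℝ) * y^k
      = x^(i+1) * (x^k * y^k / (Nat.factorial (i+(k+1)) : ℝ)) := by ring
  have e2 : y ^ (i+(k+1)) / (Nat.factorial (i+(k+1)) : ℝ) * x^k
      = y^(i+1) * (x^k * y^k / (Nat.factorial (i+(k+1)) : ℝ)) := by ring
  rw [e1, e2]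
  gcongr

theorem F_eq (m : ℕ) (y : ℝ) :
    1 - Sm m y * Real.exp (-y) = (Real.exp y - Sm m y) * Real.exp (-y) := by
  rw [sub_mul, ← Real.exp_add]; simp

theorem F_pos (m : ℕ) (y : ℝ) (hy : 0 < y) : 0 < 1 - Sm m y * Real.exp (-y) := by
  rw [F_eq]
  exact mul_pos (tail_pos m y hy) (Real.exp_pos _)

theorem f_hasDerivAt (k : ℕ) (t : ℝ) (ht : 0 < t) (x : ℝ) (hx : 0 < x) :
    HasDerivAt (fun z => Real.log (1 - Sm (k+1) (z * t) * Real.exp (-(z * t))))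
      (t / (Nat.factorial k) * ((x*t)^k / (Real.exp (x*t) - Sm (k+1) (x*t)))) x := by
  have hl : HasDerivAt (fun z : ℝ => z * t) t x := by
    simpa using (hasDerivAt_id x).mul_const t
  have hS : HasDerivAt (fun z => Sm (k+1) (z*t)) (Sm k (x*t) * t) x :=
    HasDerivAt.comp (h₂ := Sm (k+1)) x (Sm_hasDerivAt k (x*t)) hl
  have h := ((hS.mul hl.neg.exp).const_sub 1).log (F_pos (k+1) (x*t) (mul_pos hx ht)).ne'
  refine h.congr_deriv ?_
  have hp := (tail_pos (k+1) (x*t) (mul_pos hx ht)).ne'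
  have he := (Real.exp_pos (-(x*t))).ne'
  have hf : (Nat.factorial k : ℝ) ≠ 0 := by positivity
  simp only [Pi.neg_apply, Pi.mul_apply]
  rw [F_eq, div_eq_iff (mul_ne_zero hp he)]
  have : t / (Nat.factorial k) * ((x*t)^k / (Real.exp (x*t) - Sm (k+1) (x*t))) *
      ((Real.exp (x*t) - Sm (k+1) (x*t)) * Real.exp (-(x*t)))
      = t * ((x*t)^k / (Nat.factorial k)) * Real.exp (-(x*t)) := by
    generalize Real.exp (x*t) - Sm (k+1) (x*t) = R at hp ⊢
    field_simp
  rw [this, Sm_succ]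
  ring

theorem f_anti (k : ℕ) (t : ℝ) (ht : 0 < t) :
    AntitoneOn (deriv (fun z => Real.log (1 - Sm (k+1) (z * t) * Real.exp (-(z * t)))))
      (Set.Ioi 0) := by
  intro x hx y hy hxy
  rw [Set.mem_Ioi] at hx hy
  rw [(f_hasDerivAt k t ht x hx).deriv, (f_hasDerivAt k t ht y hy).deriv]
  refine mul_le_mul_of_nonneg_left ?_ (by positivity)
  rw [div_le_div_iff₀ (tail_pos _ _ (mul_pos hy ht)) (tail_pos _ _ (mul_pos hx ht))]
  have := tail_mono k (x*t) (y*t) (mul_pos hx ht) (by gcongr)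
  linarith

theorem schur_concave_h
    (m : ℕ) (hm : 1 ≤ m) (t : ℝ) (ht : 0 < t) :
    -- derivative condition: `(b_i − b_j)(∂h/∂b_i − ∂h/∂b_j) ≤ 0`
    (∀ x y : ℝ, 0 < x → 0 < y →
      (x - y) *
        (deriv (fun z => Real.log (1 - Sm m (z * t) * Real.exp (-(z * t)))) x -
         deriv (fun z => Real.log (1 - Sm m (z * t) * Real.exp (-(z * t)))) y) ≤ 0) ∧
    -- equivalently, `y ↦ ln(1 − S_m(yt) e^{−yt})` is concave on `(0, ∞)`
    ConcaveOn ℝ (Set.Ioi (0 : ℝ))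
      (fun z => Real.log (1 - Sm m (z * t) * Real.exp (-(z * t)))) ∧
    -- hence `h` attains its maximum on the simplex `{b_j > 0 : ∑ b_j = S}`
    -- when all the `b_j` are equal
    (∀ M : ℕ, 1 ≤ M → ∀ S : ℝ, 0 < S → ∀ b : ℕ → ℝ, (∀ j, 1 ≤ j → 0 < b j) →
      (∑ j ∈ Finset.Icc 1 M, b j = S) →
      ∑ j ∈ Finset.Icc 1 M, Real.log (1 - Sm m (b j * t) * Real.exp (-(b j * t)))
        ≤ M * Real.log (1 - Sm m ((S / M) * t) * Real.exp (-((S / M) * t)))) := by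
  obtain ⟨k, rfl⟩ : ∃ k, m = k+1 := ⟨m-1, by omega⟩
  have hanti := f_anti k t ht
  have hconc : ConcaveOn ℝ (Set.Ioi (0 : ℝ))
      (fun z => Real.log (1 - Sm (k+1) (z * t) * Real.exp (-(z * t)))) := by
    apply AntitoneOn.concaveOn_of_deriv (convex_Ioi 0)
    · exact fun x hx => (f_hasDerivAt k t ht x hx).continuousAt.continuousWithinAt
    · rw [interior_Ioi]
      exact fun x hx => (f_hasDerivAt k t ht x hx).differentiableAt.differentiableWithinAt
    · rwa [interior_Ioi]
  refine ⟨fun x y hx hy => ?_, hconc, ?_⟩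
  · rcases le_total x y with h | h
    · exact mul_nonpos_of_nonpos_of_nonneg (sub_nonpos.2 h) (sub_nonneg.2 (hanti hx hy h))
    · exact mul_nonpos_of_nonneg_of_nonpos (sub_nonneg.2 h) (sub_nonpos.2 (hanti hy hx h))
  · intro M hM S hS b hb hsum
    have hM0 : (0:ℝ) < M := by exact_mod_cast hM
    have h := hconc.le_map_sum (t := Finset.Icc 1 M) (w := fun _ => (1:ℝ)/M) (p := b)
      (fun i _ => by positivity) (by simp [hM0.ne'])
      (fun i hi => hb i (Finset.mem_Icc.1 hi).1)
    simp only [smul_eq_mul] at h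
    rw [← Finset.mul_sum, ← Finset.mul_sum, hsum, one_div_mul_eq_div, one_div_mul_eq_div,
      div_le_iff₀ hM0] at h
    rw [mul_comm (M:ℝ)]
    exact h
end

section
/- Let m ≥ 1 be an integer, t > 0, M ≥ 1, and b_1,…,b_M > 0 with mean b̄ = (∑_{j=1}^M b_j)/M. Then ∏_{j=1}^M (1 − S_m(b_j t) e^{−b_j t}) ≤ (1 − S_m(b̄ t) e^{−b̄ t})^M. -/
theorem aux_F (k : ℕ) (y : ℝ) :
    HasDerivAt (fun y => 1 - Sm (k+1) y * Real.exp (-y))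
      (y ^ k / (Nat.factorial k) * Real.exp (-y)) y := by
  have he : HasDerivAt (fun y : ℝ => Real.exp (-y)) (-Real.exp (-y)) y := by
    simpa using (hasDerivAt_neg y).exp
  induction k with
  | zero =>
    simp only [Sm]
    simpa using he.const_sub 1
  | succ k ih =>
    have h1 : HasDerivAt (fun y : ℝ => y ^ (k+1) / (Nat.factorial (k+1)))
        (y ^ k / (Nat.factorial k)) y := by
      have := (hasDerivAt_pow (k+1) y).div_const ((Nat.factorial (k+1) : ℕ) : ℝ)
      refine this.congr_deriv ?_
      have h0 : ((Nat.factorial k : ℕ) : ℝ) ≠ 0 := by positivity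
      rw [Nat.factorial_succ]
      push_cast
      field_simp
    have h2 := ih.sub (h1.mul he)
    refine (h2.congr_deriv (by ring)).congr_of_eventuallyEq (Filter.Eventually.of_forall ?_)
    intro z
    simp only [Sm, Pi.sub_apply, Pi.mul_apply]
    rw [Finset.sum_range_succ _ (k+1)]
    ring

theorem aux_f (k : ℕ) (y : ℝ) (hy : 0 < y) :
    HasDerivAt (fun y : ℝ => y ^ k / (Nat.factorial k) * Real.exp (-y))
      ((k / y - 1) * (y ^ k / (Nat.factorial k) * Real.exp (-y))) y := by
  have he : HasDerivAt (fun y : ℝ => Real.exp (-y)) (-Real.exp (-y)) y := by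
    simpa using (hasDerivAt_neg y).exp
  have := ((hasDerivAt_pow k y).div_const ((Nat.factorial k : ℕ) : ℝ)).mul he
  refine this.congr_deriv ?_
  rcases k with _ | k
  · simp
  · simp only [Nat.add_sub_cancel]
    field_simp
    ring

theorem aux_F0 (k : ℕ) : 1 - Sm (k+1) 0 * Real.exp (-0) = 0 := by
  simp [Sm, Finset.sum_range_succ']

theorem aux_pos (k : ℕ) (y : ℝ) (hy : 0 < y) : 0 < 1 - Sm (k+1) y * Real.exp (-y) := by
  have hs : StrictMonoOn (fun y => 1 - Sm (k+1) y * Real.exp (-y)) (Set.Ici 0) := by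
    apply strictMonoOn_of_deriv_pos (convex_Ici 0)
    · exact fun z _ => (aux_F k z).continuousAt.continuousWithinAt
    · intro z hz
      rw [interior_Ici] at hz
      have hz' : 0 < z := hz
      rw [(aux_F k z).deriv]
      positivity
  have := hs (Set.mem_Ici.2 le_rfl) (Set.mem_Ici.2 hy.le) hy
  simp only [aux_F0] at this
  exact this

theorem aux_G (k : ℕ) (y : ℝ) (hy : 0 < y) :
    (k - y) * (1 - Sm (k+1) y * Real.exp (-y)) ≤ y * (y ^ k / (Nat.factorial k) * Real.exp (-y)) := by
  have hs : MonotoneOn (fun y : ℝ => y * (y ^ k / (Nat.factorial k) * Real.exp (-y))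
      - (k - y) * (1 - Sm (k+1) y * Real.exp (-y))) (Set.Ici 0) := by
    apply monotoneOn_of_deriv_nonneg (convex_Ici 0)
    · apply ContinuousOn.sub
      · fun_prop
      · apply ContinuousOn.mul (by fun_prop)
        exact fun z _ => (aux_F k z).continuousAt.continuousWithinAt
    all_goals
      intro z hz
      rw [interior_Ici] at hz
      have hz' : 0 < z := hz
      have hd := ((hasDerivAt_id z).mul (aux_f k z hz')).sub
        (((hasDerivAt_id z).const_sub (k:ℝ)).mul (aux_F k z))
    · exact hd.differentiableAt.differentiableWithinAt
    · refine le_of_le_of_eq ?_ hd.deriv.symm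
      have h1 := aux_pos k z hz'
      have h2 : 0 < z ^ k / (Nat.factorial k) * Real.exp (-z) := by positivity
      simp only [id]
      generalize 1 - Sm (k+1) z * Real.exp (-z) = F at *
      generalize z ^ k / (Nat.factorial k) * Real.exp (-z) = f at *
      have : z * ((k / z - 1) * f) = (k - z) * f := by field_simp
      rw [this]
      linarith
  have := hs (Set.mem_Ici.2 le_rfl) (Set.mem_Ici.2 hy.le) hy.le
  simp only [aux_F0] at this
  linarith

theorem aux_conc (k : ℕ) :
    ConcaveOn ℝ (Set.Ioi 0) (fun y => Real.log (1 - Sm (k+1) y * Real.exp (-y))) := by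
  have h1 : ∀ y : ℝ, 0 < y → HasDerivAt (fun y => Real.log (1 - Sm (k+1) y * Real.exp (-y)))
      ((y ^ k / (Nat.factorial k) * Real.exp (-y)) / (1 - Sm (k+1) y * Real.exp (-y))) y :=
    fun y hy => (aux_F k y).log (aux_pos k y hy).ne'
  have h2 := fun (y : ℝ) (hy : 0 < y) =>
    (aux_f k y hy).div (aux_F k y) (aux_pos k y hy).ne'
  refine concaveOn_of_hasDerivWithinAt2_nonpos (convex_Ioi 0)
    (fun z hz => (h1 z hz).continuousAt.continuousWithinAt)
    (fun z hz => (h1 z (by simpa using hz)).hasDerivWithinAt)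
    (fun z hz => (h2 z (by simpa using hz)).hasDerivWithinAt) ?_
  intro z hz
  have hz' : 0 < z := by simpa using hz
  have g := aux_G k z hz'
  have p := aux_pos k z hz'
  have q : 0 < z ^ k / (Nat.factorial k) * Real.exp (-z) := by positivity
  generalize 1 - Sm (k+1) z * Real.exp (-z) = F at *
  generalize z ^ k / (Nat.factorial k) * Real.exp (-z) = f at *
  apply div_nonpos_of_nonpos_of_nonneg _ (by positivity)
  have e : (k / z - 1) * f * F - f * f = f / z * ((k - z) * F - z * f) := by field_simp
  rw [e]
  exact mul_nonpos_of_nonneg_of_nonpos (by positivity) (by linarith)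

theorem prod_le_pow_mean
    (m M : ℕ) (hm : 1 ≤ m) (hM : 1 ≤ M) (t : ℝ) (ht : 0 < t)
    (b : ℕ → ℝ) (hb : ∀ j, 1 ≤ j → 0 < b j) :
    ∏ j ∈ Finset.Icc 1 M, (1 - Sm m (b j * t) * Real.exp (-(b j * t)))
      ≤ (1 - Sm m (((∑ j ∈ Finset.Icc 1 M, b j) / M) * t) *
          Real.exp (-(((∑ j ∈ Finset.Icc 1 M, b j) / M) * t))) ^ M := by
  obtain ⟨k, rfl⟩ : ∃ k, m = k + 1 := ⟨m - 1, by omega⟩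
  have hM' : (0:ℝ) < M := by exact_mod_cast hM
  have hbt : ∀ j ∈ Finset.Icc 1 M, 0 < b j * t :=
    fun j hj => mul_pos (hb j (Finset.mem_Icc.1 hj).1) ht
  have J := (aux_conc k).le_map_sum (t := Finset.Icc 1 M) (w := fun _ => (1 / M : ℝ))
    (p := fun j => b j * t) (fun _ _ => by positivity) (by simp; field_simp) hbt
  have hS : 0 < ∑ j ∈ Finset.Icc 1 M, b j :=
    Finset.sum_pos (fun j hj => hb j (Finset.mem_Icc.1 hj).1) ⟨1, by simp [hM]⟩
  have e : ∑ j ∈ Finset.Icc 1 M, (1 / M : ℝ) • (b j * t)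
      = ((∑ j ∈ Finset.Icc 1 M, b j) / M) * t := by
    rw [← Finset.smul_sum, ← Finset.sum_mul, smul_eq_mul]
    ring
  rw [e, ← Finset.smul_sum, smul_eq_mul, ← Real.log_prod
    (fun j hj => (aux_pos k _ (hbt j hj)).ne')] at J
  have hp : 0 < ((∑ j ∈ Finset.Icc 1 M, b j) / M) * t := by positivity
  have P := aux_pos k _ hp
  rw [← Real.log_le_log_iff (Finset.prod_pos fun j hj => aux_pos k _ (hbt j hj)) (by positivity),
    Real.log_pow]
  rw [one_div, inv_mul_le_iff₀ hM'] at J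
  exact J
end
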